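/- Let G be a finite group, k a field whose characteristic does not divide the order of G, and let S, R be commutative k-algebras each equipped with an action of G by k-algebra automorphisms. Let f : S → R be a G-equivariant k-algebra homomorphism making R a formally smooth S-algebra. Then for every commutative k-algebra A with an action of G by k-algebra automorphisms, every G-equivariant k-algebra homomorphism σ : S → A, every G-invariant ideal I ⊆ A with I² = 0 (with π : A → A/I the quotient map), and every G-equivariant k-algebra homomorphism p : R → A/I with p ∘ f = π ∘ σ, there exists a G-equivariant k-algebra homomorphism h : R → A with π ∘ h = p and h ∘ f = σ. -/

import Mathlib

universe u

/-!
Any two lifts of `p` through `π` have the same image under `π`, so if `ker π` squares to zero, every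
affine combination of lifts is again multiplicative: expand `(φ i x - a) * (φ i y - b) = 0`, where
`a` and `b` are the affine combinations at `x` and `y`, and sum over `i`. When `|G|` is invertible,
the average of the conjugates `g • h₀ (g⁻¹ • ·)` of an arbitrary lift `h₀` is such a combination,
and it is `G`-equivariant.
-/

section WeightedSum

variable {ι k M N : Type*} [Semiring k] [AddCommMonoid M] [Module k M] [AddCommMonoid N]
  [Module k N] {s : Finset ι} {w : ι → k} {v : ι → M}

theorem sum_smul_eq_of_forall_eq {m : M} (hw : ∑ i ∈ s, w i = 1) (hv : ∀ i ∈ s, v i = m) :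
    ∑ i ∈ s, w i • v i = m := by
  rw [Finset.sum_congr rfl fun i hi => by rw [hv i hi], ← Finset.sum_smul, hw, one_smul]

theorem map_sum_smul_eq_of_forall_map_eq (π : M →ₗ[k] N) {n : N} (hw : ∑ i ∈ s, w i = 1)
    (hv : ∀ i ∈ s, π (v i) = n) : π (∑ i ∈ s, w i • v i) = n := by
  simpa only [map_sum, map_smul] using sum_smul_eq_of_forall_eq hw hv

end WeightedSum

theorem sum_invOf_card_eq_one (k G : Type*) [Semiring k] [Fintype G]
    [Invertible (Fintype.card G : k)] : ∑ _g : G, ⅟(Fintype.card G : k) = 1 := by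
  rw [Finset.sum_const, Finset.card_univ, nsmul_eq_mul, mul_invOf_self]

section AffineCombination

variable {ι k S R A B : Type*} [CommSemiring k] [Semiring S] [Semiring R] [Ring A] [Ring B]
  [Algebra k S] [Algebra k R] [Algebra k A] [Algebra k B]
  {s : Finset ι} {w : ι → k}

theorem sub_mul_sub_eq_zero_of_ker_sq_eq_bot {π : A →+* B} (hker : RingHom.ker π ^ 2 = ⊥)
    {a a' b b' : A} (ha : π a = π a') (hb : π b = π b') : (a - a') * (b - b') = 0 := by
  rw [← Ideal.mem_bot, ← hker, Submodule.pow_succ, Submodule.pow_one]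
  exact Ideal.mul_mem_mul ((RingHom.sub_mem_ker_iff π).2 ha) ((RingHom.sub_mem_ker_iff π).2 hb)

theorem sum_smul_mul_eq_of_ker_sq_eq_bot {π : A →ₐ[k] B}
    (hker : RingHom.ker (π : A →+* B) ^ 2 = ⊥) (hw : ∑ i ∈ s, w i = 1) {u v : ι → A} {x y : B}
    (hu : ∀ i ∈ s, π (u i) = x) (hv : ∀ i ∈ s, π (v i) = y) :
    ∑ i ∈ s, w i • (u i * v i) = (∑ i ∈ s, w i • u i) * ∑ i ∈ s, w i • v i := by
  set a := ∑ i ∈ s, w i • u i with ha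
  set b := ∑ i ∈ s, w i • v i with hb
  have hπa : π a = x := map_sum_smul_eq_of_forall_map_eq π.toLinearMap hw hu
  have hπb : π b = y := map_sum_smul_eq_of_forall_map_eq π.toLinearMap hw hv
  have expand : ∀ i ∈ s, u i * v i + a * b = u i * b + a * v i := fun i hi => by
    have hzero : (u i - a) * (v i - b) = 0 :=
      sub_mul_sub_eq_zero_of_ker_sq_eq_bot hker ((hu i hi).trans hπa.symm)
        ((hv i hi).trans hπb.symm)
    rw [← sub_eq_zero, ← hzero]
    noncomm_ring
  have sum_mul_right : ∑ i ∈ s, w i • (u i * b) = a * b := by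
    simp only [ha, Finset.sum_mul, smul_mul_assoc]
  have sum_mul_left : ∑ i ∈ s, w i • (a * v i) = a * b := by
    simp only [hb, Finset.mul_sum, mul_smul_comm]
  refine add_right_cancel (b := a * b) ?_
  calc ∑ i ∈ s, w i • (u i * v i) + a * b
      = ∑ i ∈ s, w i • (u i * v i + a * b) := by
        simp only [smul_add, Finset.sum_add_distrib, sum_smul_eq_of_forall_eq hw fun _ _ => rfl]
    _ = ∑ i ∈ s, w i • (u i * b + a * v i) :=
        Finset.sum_congr rfl fun i hi => by rw [expand i hi]
    _ = a * b + a * b := by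
        simp only [smul_add, Finset.sum_add_distrib, sum_mul_right, sum_mul_left]

/-- The affine combination `∑ i ∈ s, w i • φ i` of lifts `φ i` of an algebra homomorphism `p`
through a homomorphism `π` with square-zero kernel. It serves to average lifts without leaving the
algebra homomorphisms. -/
def affineCombinationOfLifts (π : A →ₐ[k] B) (hker : RingHom.ker (π : A →+* B) ^ 2 = ⊥)
    (s : Finset ι) (w : ι → k) (hw : ∑ i ∈ s, w i = 1) (p : R →ₐ[k] B) (φ : ι → R →ₐ[k] A)
    (hφ : ∀ i ∈ s, π.comp (φ i) = p) : R →ₐ[k] A :=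
  AlgHom.ofLinearMap (∑ i ∈ s, w i • (φ i).toLinearMap)
    (by simpa using sum_smul_eq_of_forall_eq hw fun _ _ => rfl)
    fun x y => by
      simpa using sum_smul_mul_eq_of_ker_sq_eq_bot hker hw
        (fun i hi => DFunLike.congr_fun (hφ i hi) x) fun i hi => DFunLike.congr_fun (hφ i hi) y

variable {π : A →ₐ[k] B} {hker : RingHom.ker (π : A →+* B) ^ 2 = ⊥} {hw : ∑ i ∈ s, w i = 1}
  {p : R →ₐ[k] B} {φ : ι → R →ₐ[k] A} {hφ : ∀ i ∈ s, π.comp (φ i) = p}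

theorem affineCombinationOfLifts_apply (r : R) :
    affineCombinationOfLifts π hker s w hw p φ hφ r = ∑ i ∈ s, w i • φ i r := by
  simp [affineCombinationOfLifts]

theorem comp_affineCombinationOfLifts :
    π.comp (affineCombinationOfLifts π hker s w hw p φ hφ) = p := by
  ext r
  rw [AlgHom.comp_apply, affineCombinationOfLifts_apply]
  exact map_sum_smul_eq_of_forall_map_eq π.toLinearMap hw
    fun i hi => DFunLike.congr_fun (hφ i hi) r

theorem affineCombinationOfLifts_comp {f : S →ₐ[k] R} {σ : S →ₐ[k] A}
    (hσ : ∀ i ∈ s, (φ i).comp f = σ) :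
    (affineCombinationOfLifts π hker s w hw p φ hφ).comp f = σ := by
  ext x
  rw [AlgHom.comp_apply, affineCombinationOfLifts_apply]
  exact sum_smul_eq_of_forall_eq hw fun i hi => DFunLike.congr_fun (hσ i hi) x

end AffineCombination

section Conjugation

variable {k G S R A B : Type*} [CommSemiring k] [Group G] [Semiring S] [Semiring R] [Semiring A]
  [Semiring B] [Algebra k S] [Algebra k R] [Algebra k A] [Algebra k B]
  [MulSemiringAction G R] [MulSemiringAction G A] [SMulCommClass G k R] [SMulCommClass G k A]

/-- The conjugate `r ↦ g • φ (g⁻¹ • r)` of an algebra homomorphism `φ` by a group element `g`;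
the fixed points of conjugation are the equivariant homomorphisms. -/
def conjAlgHom (g : G) (φ : R →ₐ[k] A) : R →ₐ[k] A :=
  (MulSemiringAction.toAlgHom k A g).comp (φ.comp (MulSemiringAction.toAlgHom k R g⁻¹))

theorem conjAlgHom_apply (g : G) (φ : R →ₐ[k] A) (r : R) :
    conjAlgHom g φ r = g • φ (g⁻¹ • r) :=
  rfl

theorem conjAlgHom_mul_smul (g t : G) (φ : R →ₐ[k] A) (r : R) :
    conjAlgHom (g * t) φ (g • r) = g • conjAlgHom t φ r := by
  simp only [conjAlgHom_apply, mul_inv_rev, mul_smul, inv_smul_smul]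

theorem comp_conjAlgHom [MulAction G B] {π : A →ₐ[k] B} {p : R →ₐ[k] B} {φ : R →ₐ[k] A}
    (hπ : ∀ (g : G) (a : A), π (g • a) = g • π a) (hp : ∀ (g : G) (r : R), p (g • r) = g • p r)
    (hφ : π.comp φ = p) (g : G) : π.comp (conjAlgHom g φ) = p := by
  subst hφ
  ext r
  rw [AlgHom.comp_apply, conjAlgHom_apply, hπ, ← AlgHom.comp_apply, hp, smul_inv_smul]

theorem conjAlgHom_comp [MulAction G S] {f : S →ₐ[k] R} {σ : S →ₐ[k] A} {φ : R →ₐ[k] A}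
    (hf : ∀ (g : G) (s : S), f (g • s) = g • f s) (hσ : ∀ (g : G) (s : S), σ (g • s) = g • σ s)
    (hφ : φ.comp f = σ) (g : G) : (conjAlgHom g φ).comp f = σ := by
  subst hφ
  ext s
  rw [AlgHom.comp_apply, conjAlgHom_apply, ← hf, ← AlgHom.comp_apply, hσ, smul_inv_smul]

end Conjugation

theorem exists_lift_of_surjective_of_exists_lift_quotient {k S R A B : Type*} [CommSemiring k]
    [Semiring S] [Semiring R] [Ring A] [Ring B] [Algebra k S] [Algebra k R] [Algebra k A]
    [Algebra k B] {f : S →ₐ[k] R} {σ : S →ₐ[k] A} {π : A →ₐ[k] B}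
    (hlift : ∀ p : R →ₐ[k] A ⧸ RingHom.ker π,
      p.comp f = (Ideal.Quotient.mkₐ k (RingHom.ker π)).comp σ →
        ∃ h : R →ₐ[k] A, (Ideal.Quotient.mkₐ k (RingHom.ker π)).comp h = p ∧ h.comp f = σ)
    (hπ : Function.Surjective π) {p : R →ₐ[k] B} (hp : p.comp f = π.comp σ) :
    ∃ h : R →ₐ[k] A, π.comp h = p ∧ h.comp f = σ := by
  let e : (A ⧸ RingHom.ker π) ≃ₐ[k] B := Ideal.quotientKerAlgEquivOfSurjective hπ
  have hsymm : (e.symm : B →ₐ[k] _).comp π = Ideal.Quotient.mkₐ k (RingHom.ker π) :=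
    AlgHom.ext (Ideal.quotientKerAlgEquivOfSurjective_symm_apply hπ)
  obtain ⟨h, hhp, hhσ⟩ := hlift ((e.symm : B →ₐ[k] _).comp p)
    (by rw [AlgHom.comp_assoc, hp, ← AlgHom.comp_assoc, hsymm])
  refine ⟨h, AlgHom.ext fun r => e.symm.injective ?_, hhσ⟩
  rw [← hsymm] at hhp
  exact DFunLike.congr_fun hhp r

theorem stmt5_general {k G S R A B : Type*} [CommSemiring k] [Group G] [Fintype G]
    [Invertible (Fintype.card G : k)] [Semiring S] [Semiring R] [Ring A] [Ring B]
    [Algebra k S] [Algebra k R] [Algebra k A] [Algebra k B]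
    [MulAction G S] [MulSemiringAction G R] [MulSemiringAction G A] [MulAction G B]
    [SMulCommClass G k R] [SMulCommClass G k A]
    {f : S →ₐ[k] R} (hf : ∀ (g : G) (s : S), f (g • s) = g • f s)
    {σ : S →ₐ[k] A} (hσ : ∀ (g : G) (s : S), σ (g • s) = g • σ s)
    {π : A →ₐ[k] B} (hker : RingHom.ker (π : A →+* B) ^ 2 = ⊥)
    (hπ : ∀ (g : G) (a : A), π (g • a) = g • π a)
    {p : R →ₐ[k] B} (hp : ∀ (g : G) (r : R), p (g • r) = g • p r)
    (hlift : ∃ h₀ : R →ₐ[k] A, π.comp h₀ = p ∧ h₀.comp f = σ) :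
    ∃ h : R →ₐ[k] A, (∀ (g : G) (r : R), h (g • r) = g • h r) ∧ π.comp h = p ∧ h.comp f = σ := by
  obtain ⟨h₀, hh₀p, hh₀σ⟩ := hlift
  refine ⟨affineCombinationOfLifts π hker Finset.univ (fun _ => ⅟(Fintype.card G : k))
    (sum_invOf_card_eq_one k G) p (fun g => conjAlgHom g h₀)
    (fun g _ => comp_conjAlgHom hπ hp hh₀p g), fun g r => ?_, comp_affineCombinationOfLifts,
    affineCombinationOfLifts_comp fun g _ => conjAlgHom_comp hf hσ hh₀σ g⟩
  simp only [affineCombinationOfLifts_apply, Finset.smul_sum, smul_comm g (⅟(Fintype.card G : k)),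
    ← conjAlgHom_mul_smul]
  exact (Equiv.sum_comp (Equiv.mulLeft g) fun t => _ • conjAlgHom t h₀ (g • r)).symm

/-- Formally smooth morphisms admit `G`-equivariant infinitesimal liftings
(Lemma 2.1 combined with formal smoothness). -/
theorem stmt5 {k : Type u} [Field k] (G : Type u) [Group G] [Fintype G]
    (hchar : ¬ (ringChar k ∣ Fintype.card G))
    {S R : Type u} [CommRing S] [CommRing R] [Algebra k S] [Algebra k R]
    [MulSemiringAction G S] [MulSemiringAction G R]
    [SMulCommClass G k S] [SMulCommClass G k R]
    (f : S →ₐ[k] R) (hf : ∀ (g : G) (s : S), f (g • s) = g • f s)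
    -- `R` is a formally smooth `S`-algebra (via `f`): liftings along square-zero
    -- extensions exist, compatibly with the `S`-algebra structures.
    (hsmooth : ∀ (A : Type u) [CommRing A] [Algebra k A] (I : Ideal A),
      I ^ 2 = ⊥ →
      ∀ (σ : S →ₐ[k] A) (p : R →ₐ[k] A ⧸ I),
        p.comp f = (Ideal.Quotient.mkₐ k I).comp σ →
        ∃ h : R →ₐ[k] A, (Ideal.Quotient.mkₐ k I).comp h = p ∧ h.comp f = σ) :
    ∀ (A B : Type u) [CommRing A] [CommRing B] [Algebra k A] [Algebra k B]
      [MulSemiringAction G A] [MulSemiringAction G B]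
      [SMulCommClass G k A] [SMulCommClass G k B]
      (σ : S →ₐ[k] A), (∀ (g : G) (s : S), σ (g • s) = g • σ s) →
      ∀ (I : Ideal A), I ^ 2 = ⊥ → (∀ (g : G), ∀ x ∈ I, g • x ∈ I) →
      -- `π : A → B` plays the role of the quotient map `A → A/I`
      ∀ (π : A →ₐ[k] B), Function.Surjective π →
        RingHom.ker (π : A →+* B) = I →
        (∀ (g : G) (a : A), π (g • a) = g • π a) →
      ∀ (p : R →ₐ[k] B), (∀ (g : G) (r : R), p (g • r) = g • p r) →
        p.comp f = π.comp σ →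
        ∃ h : R →ₐ[k] A, (∀ (g : G) (r : R), h (g • r) = g • h r) ∧
          π.comp h = p ∧ h.comp f = σ := by
  rintro A B _ _ _ _ _ _ _ _ σ hσ _ hI - π hπ rfl hπG p hp hpf
  have : Invertible (Fintype.card G : k) := invertibleOfRingCharNotDvd hchar
  exact stmt5_general hf hσ hI hπG hp
    (exists_lift_of_surjective_of_exists_lift_quotient (hsmooth A _ hI σ) hπ hpf)
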